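/- arXiv:1401.5738 — 3 statements merged into one kernel-verified Lean document; each statement's English description precedes it below -/
import Mathlib

section
/- Let R be a commutative ring, let I be an ideal of R with I^n = 0 for some n ≥ 1, and let τ : R → R be a ring homomorphism such that f − τ(f) ∈ I for every f ∈ R. Regard Z := id − τ as an additive (ℤ-linear) endomorphism of R, and for f ∈ R let μ_f denote the additive endomorphism of R given by multiplication by f. Then for all f₁, …, f_n ∈ R, the n-fold iterated commutator [⋯[[Z, μ_{f₁}], μ_{f₂}], ⋯ , μ_{f_n}] (formed in the ring of additive endomorphisms of R) is the zero endomorphism. In other words, Z — and hence the automorphism τ — is a differential operator of order at most n − 1 in the Grothendieck sense. -/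
/-!
Since `τ ∘ μ_a = μ_{τ a} ∘ τ`, we have `[μ_c ∘ τ, μ_a] = μ_{c (τ a - a)} ∘ τ`, so the iterated
commutator of `τ` with `μ_{f₁}, …, μ_{f_n}` is `μ_p ∘ τ` with `p = ∏ (τ f_i - f_i) ∈ I ^ n = 0`.
The identity is also an algebra endomorphism congruent to the identity, so the iterated commutators
of both terms of `id - τ` vanish.
-/

section IteratedCommutator

variable {k A : Type*} [CommSemiring k] [CommRing A] [Algebra k A]

variable (k) in
/-- The iterated commutator `[⋯[[D, μ_{a₁}], μ_{a₂}], ⋯, μ_{a_m}]` of a `k`-linear endomorphism `D`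
with the multiplication operators by the entries of the list `[a₁, …, a_m]`. Its vanishing for all
lists of length `m` says that `D` is a differential operator of order less than `m`. -/
def iteratedCommutator (D : Module.End k A) (l : List A) : Module.End k A :=
  l.foldl (fun D a => ⁅D, LinearMap.mulLeft k a⁆) D

lemma iteratedCommutator_concat (D : Module.End k A) (l : List A) (a : A) :
    iteratedCommutator k D (l ++ [a]) = ⁅iteratedCommutator k D l, LinearMap.mulLeft k a⁆ :=
  List.foldl_concat ..

lemma iteratedCommutator_sub (D E : Module.End k A) (l : List A) :
    iteratedCommutator k (D - E) l = iteratedCommutator k D l - iteratedCommutator k E l := by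
  induction l using List.reverseRecOn with
  | nil => rfl
  | append_singleton l a ih =>
    simp only [iteratedCommutator_concat, ih, Ring.lie_def, sub_mul, mul_sub]
    abel

lemma lie_mulLeft_mul_toLinearMap (τ : A →ₐ[k] A) (c a : A) :
    ⁅LinearMap.mulLeft k c * τ.toLinearMap, LinearMap.mulLeft k a⁆ =
      LinearMap.mulLeft k (c * (τ a - a)) * τ.toLinearMap := by
  ext x
  calc
    c * τ (a * x) - a * (c * τ x) = c * (τ a - a) * τ x := by rw [map_mul]; ring

lemma iteratedCommutator_toLinearMap (τ : A →ₐ[k] A) (l : List A) :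
    iteratedCommutator k τ.toLinearMap l =
      LinearMap.mulLeft k (l.map fun a => τ a - a).prod * τ.toLinearMap := by
  induction l using List.reverseRecOn with
  | nil => simp [iteratedCommutator, ← Module.End.one_eq_id]
  | append_singleton l a ih =>
    rw [iteratedCommutator_concat, ih, lie_mulLeft_mul_toLinearMap, List.map_append,
      List.prod_append, List.map_singleton, List.prod_singleton]

lemma iteratedCommutator_toLinearMap_eq_zero {I : Ideal A} {n : ℕ} (hI : I ^ n = ⊥)
    {τ : A →ₐ[k] A} (hτ : ∀ a, a - τ a ∈ I) (f : Fin n → A) :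
    iteratedCommutator k τ.toLinearMap (List.ofFn f) = 0 := by
  have prod_mem : ∏ i, (τ (f i) - f i) ∈ I ^ n := by
    simpa using Ideal.prod_mem_prod (s := Finset.univ) (I := fun _ : Fin n => I)
      fun i _ => sub_mem_comm_iff.mp (hτ (f i))
  have prod_eq_zero : ∏ i, (τ (f i) - f i) = 0 := by rwa [hI, Ideal.mem_bot] at prod_mem
  rw [iteratedCommutator_toLinearMap, List.map_ofFn, List.prod_ofFn]
  simp only [Function.comp_apply, prod_eq_zero, LinearMap.mulLeft_zero_eq_zero, zero_mul]

theorem stmt_0_general (I : Ideal A) (n : ℕ) (hI : I ^ n = ⊥) (τ : A →ₐ[k] A)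
    (hτ : ∀ a, a - τ a ∈ I) (f : Fin n → A) :
    iteratedCommutator k (LinearMap.id - τ.toLinearMap) (List.ofFn f) = 0 := by
  have id_congr (a : A) : a - AlgHom.id k A a ∈ I := by simp
  rw [← AlgHom.toLinearMap_id, iteratedCommutator_sub,
    iteratedCommutator_toLinearMap_eq_zero hI id_congr,
    iteratedCommutator_toLinearMap_eq_zero hI hτ, sub_zero]

end IteratedCommutator

/-- **Algebraic core of Lemma 1 (lem:subD).**
If `τ : R → R` is a ring homomorphism of a commutative ring `R` that is congruent to the
identity modulo an ideal `I` with `I ^ n = 0` (`n ≥ 1`), then `Z := id - τ`, viewed as a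
`ℤ`-linear endomorphism of `R`, is a differential operator of order at most `n - 1` in the
Grothendieck sense: every `n`-fold iterated commutator of `Z` with multiplication operators
vanishes. -/
theorem stmt_0 {R : Type*} [CommRing R] (I : Ideal R) (n : ℕ) (hn : 1 ≤ n)
    (hI : I ^ n = ⊥) (τ : R →+* R) (hτ : ∀ f : R, f - τ f ∈ I)
    (f : Fin n → R) :
    (List.ofFn f).foldl
      (fun D a => ⁅D, LinearMap.mulLeft ℤ a⁆)
      (LinearMap.id - τ.toAddMonoidHom.toIntLinearMap) = 0 :=
  stmt_0_general I n hI τ.toIntAlgHom hτ f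
end

section
/- Let A be a commutative ℂ-algebra that is finite-dimensional as a ℂ-vector space and is a local ring; A is then a complex Banach algebra in its unique Hausdorff topology as a finite-dimensional ℂ-space, and its maximal ideal consists of nilpotent elements. Let R > 0 and let f be a holomorphic (complex-differentiable) function on the punctured disk {z ∈ ℂ : 0 < |z| < R} with values in A, such that f(z) is a unit of A for every z in the punctured disk, and suppose there exists N ∈ ℕ such that the function z ↦ z^N·f(z) extends holomorphically across 0. Then there exists an integer n such that for every r with 0 < r < R, the circle integral ∮_{|z|=r} f′(z)·f(z)⁻¹ dz equals 2πi·n·1_A. In particular, the residue (2πi)⁻¹∮ df/f is an integer multiple of the identity of A. -/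
open Metric Real

/-!
Along a closed path the integral `J` of `df/f` satisfies `exp J = 1`, because `f` solves the linear
equation `F' = (f'/f) F` and returns to its initial value. The spectrum of `J` is therefore
contained in `2πiℤ`; if it contains `2πin`, then `x = J - 2πin` is a non-unit with `exp x = 1`.
Writing `exp x = 1 + x * e` with `e ∈ 1 + x * A`, the relation `x * e = 0` makes `e` idempotent.
If `0` and `1` are the only idempotents, then `e = 1`, since `e = 0` would make `x` a unit; hence
`x = 0` and `J = 2πin`. By Cauchy's theorem `J` does not depend on the radius of the circle.
-/

lemma eq_zero_or_eq_one_of_isIdempotentElem {R : Type*} [CommRing R] [IsLocalRing R] {e : R}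
    (he : IsIdempotentElem e) : e = 0 ∨ e = 1 := by
  rcases IsLocalRing.isUnit_or_isUnit_one_sub_self e with hunit | hunit
  · exact .inr ((IsIdempotentElem.iff_eq_one_of_isUnit hunit).mp he)
  · exact .inl (hunit.mul_right_eq_zero.mp he.one_sub_mul_self)

section Exp

lemma exists_exp_eq_one_add_mul_one_add_mul {A : Type*} [NormedRing A] [NormedAlgebra ℝ A]
    [CompleteSpace A] (x : A) : ∃ y : A, NormedSpace.exp x = 1 + x * (1 + x * y) := by
  have hsummable : Summable fun n : ℕ ↦ ((n + 2).factorial⁻¹ : ℝ) • x ^ n := by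
    refine .of_norm_bounded (NormedSpace.norm_expSeries_summable' (𝕂 := ℝ) x) fun n ↦ ?_
    rw [norm_smul, norm_smul, norm_inv, norm_inv, Real.norm_natCast, Real.norm_natCast]
    gcongr
    exact Nat.le_add_right n 2
  refine ⟨∑' n : ℕ, ((n + 2).factorial⁻¹ : ℝ) • x ^ n, ?_⟩
  have hhead : ∑ n ∈ Finset.range 2, (n.factorial⁻¹ : ℝ) • x ^ n = 1 + x := by
    simp [Finset.sum_range_succ]
  have htail : ∑' n : ℕ, ((n + 2).factorial⁻¹ : ℝ) • x ^ (n + 2) =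
      x ^ 2 * ∑' n : ℕ, ((n + 2).factorial⁻¹ : ℝ) • x ^ n := by
    rw [← hsummable.tsum_mul_left]
    exact tsum_congr fun n ↦ by rw [mul_smul_comm, ← pow_add, add_comm 2]
  rw [congrFun (NormedSpace.exp_eq_tsum ℝ) x,
    ← (NormedSpace.expSeries_summable' (𝕂 := ℝ) x).sum_add_tsum_nat_add 2, hhead, htail]
  noncomm_ring

variable {A : Type*} [NormedCommRing A] [CompleteSpace A]

lemma eq_zero_of_exp_eq_one_of_not_isUnit [NormedAlgebra ℝ A]
    (hidem : ∀ e : A, IsIdempotentElem e → e = 0 ∨ e = 1) {x : A} (hexp : NormedSpace.exp x = 1)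
    (hx : ¬IsUnit x) : x = 0 := by
  obtain ⟨y, hy⟩ := exists_exp_eq_one_add_mul_one_add_mul x
  have hmul : x * (1 + x * y) = 0 := left_eq_add.mp (hexp.symm.trans hy)
  have he : IsIdempotentElem (1 + x * y) := by
    rw [isIdempotentElem_iff]
    linear_combination y * hmul
  rcases hidem _ he with he0 | he1
  · exact absurd (.of_mul_eq_one (-y) (by linear_combination -he0)) hx
  · rwa [he1, mul_one] at hmul

lemma exists_int_eq_smul_one_of_exp_eq_one [NormedAlgebra ℂ A] [Nontrivial A]
    (hidem : ∀ e : A, IsIdempotentElem e → e = 0 ∨ e = 1) {a : A} (hexp : NormedSpace.exp a = 1) :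
    ∃ n : ℤ, a = (2 * π * Complex.I * n : ℂ) • (1 : A) := by
  let +nondep : NormedAlgebra ℚ A := .restrictScalars ℚ ℂ A
  obtain ⟨s, hs⟩ := spectrum.nonempty a
  have hs1 : NormedSpace.exp s = 1 := by simpa [hexp] using spectrum.exp_mem_exp a hs
  obtain ⟨n, hn⟩ := Complex.exp_eq_one_iff.mp (Complex.exp_eq_exp_ℂ ▸ hs1)
  have hexp_s : NormedSpace.exp (algebraMap ℂ A s) = 1 := by
    rw [← NormedSpace.algebraMap_exp_comm, hs1, map_one]
  have hexp_sub : NormedSpace.exp (a - algebraMap ℂ A s) = 1 := by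
    simpa [hexp, hexp_s, eq_comm] using
      NormedSpace.exp_add (x := a - algebraMap ℂ A s) (y := algebraMap ℂ A s)
  have hnonunit : ¬IsUnit (a - algebraMap ℂ A s) := fun h ↦ hs (IsUnit.sub_iff.mp h)
  refine ⟨n, ?_⟩
  rw [sub_eq_zero.mp (eq_zero_of_exp_eq_one_of_not_isUnit hidem hexp_sub hnonunit),
    Algebra.algebraMap_eq_smul_one, hn, mul_comm]

lemma exp_integral_mul_eq_of_hasDerivAt [NormedAlgebra ℝ A] {F G : ℝ → A} (hG : Continuous G)
    (hF : ∀ t, HasDerivAt F (G t * F t) t) (a b : ℝ) :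
    NormedSpace.exp (∫ t in a..b, G t) * F a = F b := by
  let +nondep : NormedAlgebra ℚ A := .restrictScalars ℚ ℝ A
  have hderiv (t : ℝ) : HasDerivAt (fun t ↦ NormedSpace.exp (-∫ s in a..t, G s) * F t) 0 t := by
    have hI := (hG.integral_hasStrictDerivAt a t).hasDerivAt.neg
    refine ((hasFDerivAt_exp.comp_hasDerivAt t hI).mul (hF t)).congr_deriv ?_
    simp only [smul_apply, one_apply_eq_self, smul_eq_mul, Pi.neg_apply]
    ring
  have hconst : NormedSpace.exp (-∫ s in a..b, G s) * F b = F a := by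
    simpa using is_const_of_deriv_eq_zero (fun t ↦ (hderiv t).differentiableAt)
      (fun t ↦ (hderiv t).deriv) b a
  rw [← hconst, ← mul_assoc, ← NormedSpace.exp_add, add_neg_cancel, NormedSpace.exp_zero, one_mul]

end Exp

lemma exp_circleIntegral_mul_inverse_eq_one {A : Type*} [NormedCommRing A] [NormedAlgebra ℂ A]
    [CompleteSpace A] {f f' : ℂ → A} {c : ℂ} {r : ℝ}
    (hderiv : ∀ z ∈ sphere c |r|, HasDerivAt f (f' z) z) (hcont : ContinuousOn f' (sphere c |r|))
    (hunit : ∀ z ∈ sphere c |r|, IsUnit (f z)) :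
    NormedSpace.exp (∮ z in C(c, r), f' z * Ring.inverse (f z)) = 1 := by
  have hmem := circleMap_mem_sphere' c r
  let G (θ : ℝ) : A :=
    deriv (circleMap c r) θ • (f' (circleMap c r θ) * Ring.inverse (f (circleMap c r θ)))
  have hG : Continuous G := by
    have hinv : ContinuousOn (fun z ↦ Ring.inverse (f z)) (sphere c |r|) := fun z hz ↦
      ((hderiv z hz).differentiableAt.inverse (hunit z hz)).continuousAt.continuousWithinAt
    have hlog := (hcont.mul hinv).comp_continuous (continuous_circleMap c r) hmem
    simp only [G, deriv_circleMap]
    exact ((continuous_circleMap 0 r).mul continuous_const).smul hlog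
  have hF (θ : ℝ) : HasDerivAt (f ∘ circleMap c r) (G θ * (f ∘ circleMap c r) θ) θ := by
    refine ((hderiv _ (hmem θ)).scomp θ (hasDerivAt_circleMap c r θ)).congr_deriv ?_
    simp only [G, deriv_circleMap, Function.comp_apply, smul_mul_assoc, mul_assoc,
      Ring.inverse_mul_cancel _ (hunit _ (hmem θ)), mul_one]
  have hreturn : f (circleMap c r (2 * π)) = f (circleMap c r 0) := by
    simpa using congrArg f (periodic_circleMap c r 0)
  have hperiod := exp_integral_mul_eq_of_hasDerivAt hG hF 0 (2 * π)
  rw [Function.comp_apply, Function.comp_apply, hreturn] at hperiod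
  exact (hunit _ (hmem 0)).mul_eq_right.mp hperiod

lemma circleIntegral_eq_of_differentiableOn_punctured_ball {E : Type*} [NormedAddCommGroup E]
    [NormedSpace ℂ E] {f : ℂ → E} {c : ℂ} {R r s : ℝ}
    (hf : DifferentiableOn ℂ f (ball c R \ {c})) (hr : 0 < r) (hrs : r ≤ s) (hsR : s < R) :
    (∮ z in C(c, s), f z) = ∮ z in C(c, r), f z := by
  have hsub : closedBall c s \ ball c r ⊆ ball c R \ {c} :=
    Set.sdiff_subset_sdiff (closedBall_subset_ball hsR) (by simpa using hr)
  refine Complex.circleIntegral_eq_of_differentiable_on_annulus_off_countable hr hrs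
    Set.countable_empty (hf.continuousOn.mono hsub) fun z hz ↦ ?_
  refine hf.differentiableAt ((isOpen_ball.sdiff isClosed_singleton).mem_nhds (hsub ?_))
  exact Set.sdiff_subset_sdiff ball_subset_closedBall ball_subset_closedBall hz.1

theorem stmt_2_general {A : Type*} [NormedCommRing A] [NormedAlgebra ℂ A] [CompleteSpace A]
    [Nontrivial A] (hidem : ∀ e : A, IsIdempotentElem e → e = 0 ∨ e = 1) (c : ℂ) (R : ℝ)
    (f : ℂ → A) (hf : DifferentiableOn ℂ f (ball c R \ {c}))
    (hunit : ∀ z ∈ ball c R \ {c}, IsUnit (f z)) :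
    ∃ n : ℤ, ∀ r : ℝ, 0 < r → r < R →
      (∮ z in C(c, r), deriv f z * Ring.inverse (f z)) =
        ((2 * π * Complex.I * n : ℂ) • (1 : A)) := by
  rcases le_or_gt R 0 with hR | hR
  · exact ⟨0, fun r hr hrR ↦ absurd (hr.trans hrR) hR.not_gt⟩
  have hopen : IsOpen (ball c R \ {c}) := isOpen_ball.sdiff isClosed_singleton
  have hsphere : sphere c |R / 2| ⊆ ball c R \ {c} := fun z hz ↦ by
    rw [abs_of_pos (half_pos hR)] at hz
    exact ⟨sphere_subset_ball (half_lt_self hR) hz, ne_of_mem_sphere hz (half_pos hR).ne'⟩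
  have hdlog := (hf.deriv hopen).mul (hf.inverse hunit)
  have hexp := exp_circleIntegral_mul_inverse_eq_one
    (fun z hz ↦ (hf.differentiableAt (hopen.mem_nhds (hsphere hz))).hasDerivAt)
    ((hf.deriv hopen).continuousOn.mono hsphere) (fun z hz ↦ hunit z (hsphere hz))
  obtain ⟨n, hn⟩ := exists_int_eq_smul_one_of_exp_eq_one hidem hexp
  refine ⟨n, fun r hr hrR ↦ ?_⟩
  rw [← hn]
  rcases le_total r (R / 2) with h | h
  · exact (circleIntegral_eq_of_differentiableOn_punctured_ball hdlog hr h (half_lt_self hR)).symm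
  · exact circleIntegral_eq_of_differentiableOn_punctured_ball hdlog (half_pos hR) h hrR

/-- **Lemma 7 (lem:integer): `∮_P df/f` is an integer.**
Let `A` be a commutative finite-dimensional local `ℂ`-algebra (a complex Banach algebra in
its unique Hausdorff topology; its maximal ideal consists of nilpotents).  If `f` is a
holomorphic `A`-valued function on the punctured disk `{0 < |z| < R}`, taking unit values,
and `z ^ N • f z` extends holomorphically across `0` for some `N`, then there is an integer
`n` such that `∮_{|z|=r} f′(z) · f(z)⁻¹ dz = 2πi·n·1_A` for every `0 < r < R`. -/
theorem stmt_2 {A : Type*} [NormedCommRing A] [NormedAlgebra ℂ A]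
    [FiniteDimensional ℂ A] [IsLocalRing A]
    (R : ℝ) (hR : 0 < R) (f : ℂ → A)
    (hf : DifferentiableOn ℂ f (ball (0 : ℂ) R \ {0}))
    (hunit : ∀ z ∈ ball (0 : ℂ) R \ {0}, IsUnit (f z))
    (hext : ∃ N : ℕ, ∃ g : ℂ → A, DifferentiableOn ℂ g (ball (0 : ℂ) R) ∧
      ∀ z ∈ ball (0 : ℂ) R \ {0}, g z = z ^ N • f z) :
    ∃ n : ℤ, ∀ r : ℝ, 0 < r → r < R →
      (∮ z in C(0, r), deriv f z * Ring.inverse (f z)) =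
        ((2 * π * Complex.I * n : ℂ) • (1 : A)) := by
  have : CompleteSpace A := FiniteDimensional.complete ℂ A
  exact stmt_2_general (fun _ ↦ eq_zero_or_eq_one_of_isIdempotentElem) 0 R f hf hunit
end

section
/- Let A be a commutative ℂ-algebra that is finite-dimensional as a ℂ-vector space and is a local ring, with maximal ideal m; the composite ℂ → A → A/m is an isomorphism, and let ρ : A → ℂ denote the induced residue map. Let f and g be formal Laurent series with coefficients in A (elements of A((z)), i.e., Hahn series over ℤ with values in A) satisfying f·g = 1. Let Df denote the formal derivative of f, the Laurent series whose coefficient of z^m is (m+1) times the coefficient of z^{m+1} in f. Let f̄ ∈ ℂ((z)) be the Laurent series obtained by applying ρ to each coefficient of f; then f̄ ≠ 0, and the coefficient of z^{−1} in the product (Df)·g equals n·1_A, where n ∈ ℤ is the order of f̄ (the least exponent whose coefficient in f̄ is nonzero). -/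
/-!
Write `θ = z d/dz`. The residue of `df / f` is the constant coefficient of `θ f / f`, which is
additive in `f`. It vanishes when `f` and `f⁻¹` both have only nonnegative exponents, or both only
nonpositive ones, and it equals `n` for `f = zⁿ`.

If the coefficient of `zⁿ` in `f` is a unit and those below it are nilpotent, then deleting the
latter leaves `zⁿ` times an invertible power series, and `f` differs from this by a factor `1 + x`,
where the coefficients of `x` lie in a nilpotent ideal `I`. Splitting `x = y + z` by the sign of
the exponents, `1 + x` agrees with `(1 + y) (1 + z)` modulo `I²`, so iterating shows that `1 + x`
contributes nothing. No division by integers occurs, so this works in every characteristic.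
-/

open HahnSeries
open scoped LaurentSeries Pointwise

section Pointed

theorem isPointed_nonneg (G : Type*) [AddCommGroup G] [PartialOrder G] [IsOrderedAddMonoid G] :
    (AddSubmonoid.nonneg G).IsPointed :=
  fun _ hm hm' => le_antisymm (neg_nonneg.1 hm') hm

theorem isPointed_neg {G : Type*} [AddCommGroup G] {S : AddSubmonoid G} (hS : S.IsPointed) :
    (-S).IsPointed :=
  fun m hm hm' => hS m (by simpa using hm') hm

end Pointed

section SupportedSubring

variable {Γ R : Type*} [AddCommMonoid Γ] [PartialOrder Γ] [IsOrderedCancelAddMonoid Γ] [Ring R]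

/-- The subring of Hahn series all of whose exponents lie in a given additive submonoid. In `R⸨X⸩`,
the nonnegative integers give the power series and the nonpositive ones the polynomials in `z⁻¹`. -/
def supportedSubring (R : Type*) [Ring R] (S : AddSubmonoid Γ) : Subring R⟦Γ⟧ where
  carrier := {x | x.support ⊆ S}
  zero_mem' := by simp
  one_mem' m hm := by
    obtain rfl : m = 0 := by
      by_contra h
      simp [h] at hm
    exact S.zero_mem
  add_mem' hx hy := (support_add_subset _ _).trans (Set.union_subset hx hy)
  neg_mem' hx := by simpa using hx
  mul_mem' hx hy := support_mul_subset.trans <| (Set.add_subset_add hx hy).trans <| by simp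

theorem mem_supportedSubring {S : AddSubmonoid Γ} {x : R⟦Γ⟧} :
    x ∈ supportedSubring R S ↔ ∀ m, x.coeff m ≠ 0 → m ∈ S :=
  Iff.rfl

theorem ofPowerSeries_mem_supportedSubring_nonneg (p : PowerSeries R) :
    ofPowerSeries ℤ R p ∈ supportedSubring R (AddSubmonoid.nonneg ℤ) :=
  mem_supportedSubring.2 fun m hm => by
    by_contra hneg
    simp_all [PowerSeries.coeff_coe]

end SupportedSubring

section CoeffIdeal

variable {Γ A : Type*} [AddCommMonoid Γ] [PartialOrder Γ] [IsOrderedCancelAddMonoid Γ] [CommRing A]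

/-- The ideal of Hahn series all of whose coefficients lie in `I`. It can be larger than the
extension of `I` to Hahn series when `I` is not finitely generated. -/
def coeffIdeal (Γ : Type*) [AddCommMonoid Γ] [PartialOrder Γ] [IsOrderedCancelAddMonoid Γ]
    (I : Ideal A) : Ideal A⟦Γ⟧ where
  carrier := {x | ∀ m, x.coeff m ∈ I}
  zero_mem' _ := I.zero_mem
  add_mem' hx hy m := I.add_mem (hx m) (hy m)
  smul_mem' c x hx m := by
    rw [smul_eq_mul, coeff_mul]
    exact I.sum_mem fun ij _ => I.mul_mem_left _ (hx ij.2)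

theorem mem_coeffIdeal {I : Ideal A} {x : A⟦Γ⟧} : x ∈ coeffIdeal Γ I ↔ ∀ m, x.coeff m ∈ I :=
  Iff.rfl

theorem coeffIdeal_bot : coeffIdeal Γ (⊥ : Ideal A) = ⊥ := by
  ext x
  simp [mem_coeffIdeal, HahnSeries.ext_iff, funext_iff]

theorem coeffIdeal_mul_le (I J : Ideal A) :
    coeffIdeal Γ I * coeffIdeal Γ J ≤ coeffIdeal Γ (I * J) :=
  Ideal.mul_le.2 fun _ hx _ hy m => by
    rw [coeff_mul]
    exact Ideal.sum_mem _ fun ij _ => Ideal.mul_mem_mul (hx ij.1) (hy ij.2)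

theorem coeffIdeal_pow_le (I : Ideal A) (k : ℕ) : coeffIdeal Γ I ^ k ≤ coeffIdeal Γ (I ^ k) := by
  induction k with
  | zero => exact fun _ _ => by simp [mem_coeffIdeal]
  | succ k ih =>
    rw [pow_succ, pow_succ]
    exact (Ideal.mul_mono_left ih).trans (coeffIdeal_mul_le _ _)

theorem isNilpotent_of_mem_coeffIdeal {I : Ideal A} (hI : IsNilpotent I) {x : A⟦Γ⟧}
    (hx : x ∈ coeffIdeal Γ I) : IsNilpotent x := by
  obtain ⟨k, hk⟩ := hI
  have hxk := coeffIdeal_pow_le I k (Ideal.pow_mem_pow hx k)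
  rw [hk, Ideal.zero_eq_bot, coeffIdeal_bot] at hxk
  exact ⟨k, hxk⟩

theorem truncLT_mem_coeffIdeal [DecidableLT Γ] {I : Ideal A} {x : A⟦Γ⟧} {c : Γ}
    (hx : ∀ m < c, x.coeff m ∈ I) : truncLT c x ∈ coeffIdeal Γ I := fun m => by
  rw [HahnSeries.coeff_truncLT]
  split_ifs with hm
  exacts [hx m hm, I.zero_mem]

theorem exists_nonneg_nonpos_add_eq_of_mem_coeffIdeal {I : Ideal A} {x : A⸨X⸩}
    (hx : x ∈ coeffIdeal ℤ I) :
    ∃ y ∈ coeffIdeal ℤ I, ∃ z ∈ coeffIdeal ℤ I,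
      y ∈ supportedSubring A (AddSubmonoid.nonneg ℤ) ∧
      z ∈ supportedSubring A (-AddSubmonoid.nonneg ℤ) ∧ y + z = x := by
  have hz : truncLT 0 x ∈ coeffIdeal ℤ I := truncLT_mem_coeffIdeal fun m _ => hx m
  refine ⟨x - truncLT 0 x, sub_mem hx hz, truncLT 0 x, hz, ?_, ?_, sub_add_cancel _ _⟩
  all_goals
    refine mem_supportedSubring.2 fun m hm => ?_
    by_contra hsign
    simp_all [HahnSeries.coeff_truncLT, le_of_lt]

theorem exists_isNilpotent_forall_lt_coeff_mem {x : A⸨X⸩} {n : ℤ}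
    (hx : ∀ m < n, IsNilpotent (x.coeff m)) :
    ∃ I : Ideal A, IsNilpotent I ∧ ∀ m < n, x.coeff m ∈ I := by
  have hfin : (Set.Ico x.order n).Finite := Set.finite_Ico _ _
  refine ⟨Ideal.span (x.coeff '' Set.Ico x.order n), ?_, fun m hm => ?_⟩
  · rw [Ideal.FG.isNilpotent_iff_le_nilradical (Submodule.fg_span (hfin.image _)), Ideal.span_le]
    rintro _ ⟨m, hm, rfl⟩
    exact hx m hm.2
  · obtain hlt | hle := lt_or_ge m x.order
    · rw [coeff_eq_zero_of_lt_order hlt]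
      exact Ideal.zero_mem _
    · exact Ideal.subset_span ⟨m, ⟨hle, hm⟩, rfl⟩

end CoeffIdeal

section EulerOperator

variable {R : Type*} [Ring R]

/-- The Euler operator `z d/dz` on Laurent series. -/
def eulerOperator (x : R⸨X⸩) : R⸨X⸩ where
  coeff m := m • x.coeff m
  isPWO_support' := x.isPWO_support.mono <|
    Function.support_smul_subset_right (fun m : ℤ => m) x.coeff

@[simp]
theorem coeff_eulerOperator (x : R⸨X⸩) (m : ℤ) : (eulerOperator x).coeff m = m • x.coeff m :=
  rfl

theorem support_eulerOperator_subset (x : R⸨X⸩) : (eulerOperator x).support ⊆ x.support :=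
  Function.support_smul_subset_right (fun m : ℤ => m) x.coeff

theorem eulerOperator_mul (x y : R⸨X⸩) :
    eulerOperator (x * y) = eulerOperator x * y + x * eulerOperator y := by
  ext m
  rw [coeff_eulerOperator, coeff_add,
    coeff_mul_left' x.isPWO_support (support_eulerOperator_subset x),
    coeff_mul_right' y.isPWO_support (support_eulerOperator_subset y), coeff_mul,
    Finset.smul_sum, ← Finset.sum_add_distrib]
  refine Finset.sum_congr rfl fun ij hij => ?_
  have hm : ij.1 + ij.2 = m := (Finset.mem_antidiagonal.1 hij).2.2
  simp only [coeff_eulerOperator, ← hm, add_smul, smul_mul_assoc, mul_smul_comm]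

theorem eulerOperator_single_one (n : ℤ) :
    eulerOperator (single n (1 : R)) = C (n : R) * single n 1 := by
  rw [C_apply, single_mul_single, zero_add, mul_one]
  ext m
  by_cases hm : m = n <;> simp [hm]

theorem coeff_neg_one_mul_eq_coeff_zero_eulerOperator_mul {f Df : R⸨X⸩}
    (hDf : ∀ m : ℤ, Df.coeff m = (m + 1) • f.coeff (m + 1)) (g : R⸨X⸩) :
    (Df * g).coeff (-1) = (eulerOperator f * g).coeff 0 := by
  have hθ : Df = single (-1) 1 * eulerOperator f := by
    ext m
    simp [coeff_single_mul, hDf]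
  rw [hθ, mul_assoc, coeff_single_mul, one_mul, sub_self]

end EulerOperator

section LogResidue

variable {A : Type*} [CommRing A]

/-- The residue of `df / f` for an invertible Laurent series `f`, encoded as the constant
coefficient of `(z df/dz) / f`. -/
noncomputable def logResidue (u : A⸨X⸩ˣ) : A :=
  (eulerOperator (u : A⸨X⸩) * (↑u⁻¹ : A⸨X⸩)).coeff 0

theorem logResidue_mul (u v : A⸨X⸩ˣ) : logResidue (u * v) = logResidue u + logResidue v := by
  have key : eulerOperator (↑(u * v) : A⸨X⸩) * (↑(u * v)⁻¹ : A⸨X⸩) =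
      eulerOperator (u : A⸨X⸩) * (↑u⁻¹ : A⸨X⸩) + eulerOperator (v : A⸨X⸩) * (↑v⁻¹ : A⸨X⸩) := by
    rw [mul_inv, Units.val_mul, Units.val_mul, eulerOperator_mul]
    linear_combination (eulerOperator (u : A⸨X⸩) * (↑u⁻¹ : A⸨X⸩)) * v.mul_inv +
      (eulerOperator (v : A⸨X⸩) * (↑v⁻¹ : A⸨X⸩)) * u.mul_inv
  rw [logResidue, key, coeff_add]
  rfl

theorem logResidue_eq_of_coe_eq_single {u : A⸨X⸩ˣ} {n : ℤ} (hu : (u : A⸨X⸩) = single n 1) :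
    logResidue u = n • (1 : A) := by
  rw [logResidue, hu, eulerOperator_single_one, ← hu, mul_assoc, Units.mul_inv, mul_one,
    C_apply, coeff_single_same, zsmul_one]

theorem logResidue_eq_zero_of_mem_supportedSubring {S : AddSubmonoid ℤ} (hS : S.IsPointed)
    {u : A⸨X⸩ˣ} (hu : (u : A⸨X⸩) ∈ supportedSubring A S)
    (hu' : (↑u⁻¹ : A⸨X⸩) ∈ supportedSubring A S) : logResidue u = 0 := by
  rw [logResidue, coeff_mul]
  refine Finset.sum_eq_zero fun ij hij => ?_
  obtain ⟨hi, hj, hij⟩ := Finset.mem_antidiagonal.1 hij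
  have hi_neg : -ij.1 ∈ S := by
    rw [neg_eq_of_add_eq_zero_right hij]
    exact hu' hj
  have hi_zero : ij.1 = 0 := hS _ (hu (support_eulerOperator_subset _ hi)) hi_neg
  rw [coeff_eulerOperator, hi_zero, zero_smul, zero_mul]

theorem exists_unit_eq_map_logResidue_eq_zero {S : AddSubmonoid ℤ} (hS : S.IsPointed)
    {M : Type*} [Monoid M] (φ : M →* A⸨X⸩) (hφ : ∀ a, φ a ∈ supportedSubring A S)
    {a : M} (ha : IsUnit a) : ∃ u : A⸨X⸩ˣ, (u : A⸨X⸩) = φ a ∧ logResidue u = 0 := by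
  obtain ⟨a, rfl⟩ := ha
  exact ⟨Units.map φ a, rfl, logResidue_eq_zero_of_mem_supportedSubring hS (hφ _) (hφ _)⟩

theorem exists_unit_eq_one_add_logResidue_eq_zero {S : AddSubmonoid ℤ} (hS : S.IsPointed)
    {x : A⸨X⸩} (hx : x ∈ supportedSubring A S) (hnil : IsNilpotent x) :
    ∃ u : A⸨X⸩ˣ, (u : A⸨X⸩) = 1 + x ∧ logResidue u = 0 := by
  have hnil' : IsNilpotent (⟨x, hx⟩ : supportedSubring A S) :=
    (IsNilpotent.map_iff (f := (supportedSubring A S).subtype) Subtype.val_injective).1 hnil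
  exact exists_unit_eq_map_logResidue_eq_zero hS ((supportedSubring A S).subtype : _ →* A⸨X⸩)
    (fun a => a.2) hnil'.isUnit_one_add

theorem exists_logResidue_eq_and_sub_one_mem_coeffIdeal_sq {I : Ideal A} (hI : IsNilpotent I)
    {u : A⸨X⸩ˣ} (hu : (u : A⸨X⸩) - 1 ∈ coeffIdeal ℤ I) :
    ∃ w : A⸨X⸩ˣ, (w : A⸨X⸩) - 1 ∈ coeffIdeal ℤ (I ^ 2) ∧ logResidue w = logResidue u := by
  obtain ⟨y, hy, z, hz, hyS, hzS, hyz⟩ := exists_nonneg_nonpos_add_eq_of_mem_coeffIdeal hu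
  obtain ⟨v, hv, hres_v⟩ := exists_unit_eq_one_add_logResidue_eq_zero
    (isPointed_nonneg ℤ) hyS (isNilpotent_of_mem_coeffIdeal hI hy)
  obtain ⟨v', hv', hres_v'⟩ := exists_unit_eq_one_add_logResidue_eq_zero
    (isPointed_neg (isPointed_nonneg ℤ)) hzS (isNilpotent_of_mem_coeffIdeal hI hz)
  obtain ⟨w, rfl⟩ : ∃ w, u = w * (v * v') := ⟨u * (v * v')⁻¹, by rw [inv_mul_cancel_right]⟩
  have hw : (w : A⸨X⸩) - 1 = -(↑(v * v')⁻¹ * (y * z)) := by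
    have hprod : (↑(v * v') : A⸨X⸩) = ↑(w * (v * v')) + y * z := by
      rw [Units.val_mul v, hv, hv']
      linear_combination hyz
    rw [Units.val_mul w] at hprod
    linear_combination (1 - w : A⸨X⸩) * (v * v').mul_inv - (↑(v * v')⁻¹ : A⸨X⸩) * hprod
  refine ⟨w, ?_, ?_⟩
  · rw [hw, pow_two]
    exact neg_mem (Ideal.mul_mem_left _ _ (coeffIdeal_mul_le I I (Ideal.mul_mem_mul hy hz)))
  · rw [logResidue_mul, logResidue_mul, hres_v, hres_v', add_zero, add_zero]

theorem logResidue_eq_zero_of_sub_one_mem_coeffIdeal {I : Ideal A} (hI : IsNilpotent I)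
    {u : A⸨X⸩ˣ} (hu : (u : A⸨X⸩) - 1 ∈ coeffIdeal ℤ I) : logResidue u = 0 := by
  obtain ⟨k, hk⟩ := hI
  replace hk : I ^ 2 ^ k = ⊥ := pow_eq_zero_of_le Nat.lt_two_pow_self.le hk
  induction k generalizing I u with
  | zero =>
    rw [pow_zero, pow_one] at hk
    rw [hk, coeffIdeal_bot, Ideal.mem_bot, sub_eq_zero] at hu
    simpa using logResidue_eq_of_coe_eq_single (n := 0) hu
  | succ k ih =>
    obtain ⟨w, hw, hres⟩ := exists_logResidue_eq_and_sub_one_mem_coeffIdeal_sq ⟨_, hk⟩ hu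
    rw [← hres]
    exact ih hw (by rwa [← pow_mul, ← pow_succ'])

theorem exists_unit_eq_logResidue_eq_of_isUnit_coeff {x : A⸨X⸩} {n : ℤ}
    (hn : IsUnit (x.coeff n)) (hlt : ∀ m < n, x.coeff m = 0) :
    ∃ u : A⸨X⸩ˣ, (u : A⸨X⸩) = x ∧ logResidue u = n • (1 : A) := by
  let p : PowerSeries A := PowerSeries.mk fun i => x.coeff (n + i)
  have hp : IsUnit p := by
    rw [PowerSeries.isUnit_iff_constantCoeff]
    simpa [p, ← PowerSeries.coeff_zero_eq_constantCoeff_apply] using hn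
  have hxp : x = single n 1 * ofPowerSeries ℤ A p := by
    ext m
    rw [coeff_single_mul, one_mul, PowerSeries.coeff_coe]
    split_ifs with hm
    · exact hlt m (sub_neg.1 hm)
    · rw [PowerSeries.coeff_mk]
      congr
      omega
  obtain ⟨z, hz⟩ : IsUnit (single n (1 : A)) :=
    .of_mul_eq_one (single (-n) 1) (by simp [single_mul_single])
  obtain ⟨v, hv, hres⟩ := exists_unit_eq_map_logResidue_eq_zero (isPointed_nonneg ℤ)
    (ofPowerSeries ℤ A : _ →* A⸨X⸩) ofPowerSeries_mem_supportedSubring_nonneg hp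
  refine ⟨z * v, by rw [Units.val_mul, hz, hv, hxp]; rfl, ?_⟩
  rw [logResidue_mul, logResidue_eq_of_coe_eq_single hz, hres, add_zero]

theorem logResidue_eq_of_isUnit_coeff_of_isNilpotent_coeff {u : A⸨X⸩ˣ} {n : ℤ}
    (hn : IsUnit ((u : A⸨X⸩).coeff n)) (hlt : ∀ m < n, IsNilpotent ((u : A⸨X⸩).coeff m)) :
    logResidue u = n • (1 : A) := by
  obtain ⟨I, hI, huI⟩ := exists_isNilpotent_forall_lt_coeff_mem hlt
  obtain ⟨v, hv, hres⟩ := exists_unit_eq_logResidue_eq_of_isUnit_coeff (n := n)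
    (x := (u : A⸨X⸩) - truncLT n (u : A⸨X⸩)) (by simpa using hn) (fun m hm => by simp [hm])
  have hquot : (↑(u * v⁻¹) : A⸨X⸩) - 1 = ↑v⁻¹ * truncLT n (u : A⸨X⸩) := by
    rw [Units.val_mul]
    linear_combination v.inv_mul - (↑v⁻¹ : A⸨X⸩) * hv
  have hmem : (↑(u * v⁻¹) : A⸨X⸩) - 1 ∈ coeffIdeal ℤ I := by
    rw [hquot]
    exact Ideal.mul_mem_left _ _ (truncLT_mem_coeffIdeal huI)
  rw [← inv_mul_cancel_right u v, logResidue_mul,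
    logResidue_eq_zero_of_sub_one_mem_coeffIdeal hI hmem, hres, zero_add]

end LogResidue

theorem isUnit_of_map_mul_eq_one {A B : Type*} [CommRing A] [Ring B] {ρ : A →+* B}
    (hρ : RingHom.ker ρ ≤ nilradical A) {a b : A} (hab : ρ a * ρ b = 1) : IsUnit a := by
  have hnil : IsNilpotent (a * b - 1) := hρ <| by
    rw [RingHom.mem_ker, map_sub, map_mul, hab, map_one, sub_self]
  refine isUnit_of_mul_isUnit_left (y := b) ?_
  simpa using hnil.isUnit_one_add

theorem stmt_7_general {A B : Type*} [CommRing A] [Ring B] [IsDomain B]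
    (ρ : A →+* B) (hρ : RingHom.ker ρ ≤ nilradical A)
    (f g : LaurentSeries A) (hfg : f * g = 1)
    (Df : LaurentSeries A)
    (hDf : ∀ m : ℤ, Df.coeff m = (m + 1) • f.coeff (m + 1))
    (fbar : LaurentSeries B)
    (hfbar : ∀ m : ℤ, fbar.coeff m = ρ (f.coeff m)) :
    fbar ≠ 0 ∧ (Df * g).coeff (-1) = fbar.order • (1 : A) := by
  obtain rfl : fbar = f.map ρ := HahnSeries.ext (funext hfbar)
  have hmap : f.map ρ * g.map ρ = 1 := calc
    f.map ρ * g.map ρ = (f * g).map ρ := (HahnSeries.map_mul (ρ : A →ₙ+* B)).symm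
    _ = 1 := by rw [hfg]; exact HahnSeries.map_one ρ.toMonoidWithZeroHom
  have hlead : ρ (f.coeff (f.map ρ).order) * ρ (g.coeff (g.map ρ).order) = 1 := by
    rw [← HahnSeries.map_coeff, ← HahnSeries.map_coeff, ← leadingCoeff_eq, ← leadingCoeff_eq,
      ← leadingCoeff_mul, hmap, leadingCoeff_one]
  refine ⟨left_ne_zero_of_mul_eq_one hmap, ?_⟩
  rw [coeff_neg_one_mul_eq_coeff_zero_eulerOperator_mul hDf]
  refine logResidue_eq_of_isUnit_coeff_of_isNilpotent_coeff
    (u := .mkOfMulEqOne f g hfg) (isUnit_of_map_mul_eq_one hρ hlead) fun m hm => hρ ?_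
  rw [RingHom.mem_ker]
  exact (hfbar m).symm.trans (coeff_eq_zero_of_lt_order hm)

/-- **Formal Laurent-series version of Lemma 7 (lem:integer).**
Let `A` be a commutative finite-dimensional local `ℂ`-algebra with maximal ideal `m`, and
let `ρ : A → ℂ` be the residue map (the `ℂ`-algebra map with kernel `m`, induced by the
isomorphism `ℂ ≅ A/m`).  Let `f, g ∈ A((z))` be formal Laurent series with `f * g = 1`,
let `Df` be the formal derivative of `f`, and let `f̄ ∈ ℂ((z))` be obtained by applying
`ρ` to each coefficient of `f`.  Then `f̄ ≠ 0` and the coefficient of `z⁻¹` in `(Df) * g`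
equals `n • 1_A`, where `n` is the order of `f̄`. -/
theorem stmt_7 {A : Type*} [CommRing A] [Algebra ℂ A]
    [FiniteDimensional ℂ A] [IsLocalRing A]
    (ρ : A →ₐ[ℂ] ℂ) (hρ : RingHom.ker ρ.toRingHom = IsLocalRing.maximalIdeal A)
    (f g : LaurentSeries A) (hfg : f * g = 1)
    (Df : LaurentSeries A)
    (hDf : ∀ m : ℤ, Df.coeff m = (m + 1) • f.coeff (m + 1))
    (fbar : LaurentSeries ℂ)
    (hfbar : ∀ m : ℤ, fbar.coeff m = ρ (f.coeff m)) :
    fbar ≠ 0 ∧ (Df * g).coeff (-1) = fbar.order • (1 : A) := by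
  have : IsArtinianRing A := .of_finite ℂ A
  exact stmt_7_general ρ.toRingHom
    (hρ.trans (Ring.KrullDimLE.nilradical_eq_maximalIdeal A).symm).le f g hfg Df hDf fbar hfbar
end
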